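/- Single-valuedness of the Bregman proximal mapping under semiconvexity: under Assumption H1 and the Bregman setting, if g is semiconvex with modulus ρ ≥ 0 and the stepsize satisfies 0 < ε, ε·L < m and ε·ρ < m, then for every x ∈ ℝ^n the set T(x) of global minimizers of y ↦ ⟨∇f(x), y − x⟩ + g(y) + D(x,y)/ε contains exactly one point (it is a singleton). -/

import Mathlib

open Set Metric Filter Topology
open scoped RealInnerProductSpace

noncomputable section

variable {E : Type*} [NormedAddCommGroup E] [InnerProductSpace ℝ E] [FiniteDimensional ℝ E]

/-- The Bregman distance generated by `K` (with gradient `K'`). -/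
def bregD (K : E → ℝ) (K' : E → E) (x y : E) : ℝ := K y - K x - ⟪K' x, y - x⟫

/-- The Bregman proximal mapping: the set of global minimizers of
`y ↦ ⟪∇f x, y - x⟫ + g y + D(x,y)/ε`. -/
def bregT (f' : E → E) (g : E → ℝ) (K : E → ℝ) (K' : E → E) (ε : ℝ) (x : E) : Set E :=
  {y | ∀ z, ⟪f' x, y - x⟫ + g y + bregD K K' x y / ε ≤ ⟪f' x, z - x⟫ + g z + bregD K K' x z / ε}

/-- The Bregman proximal envelope. -/
def bregEnv (f : E → ℝ) (f' : E → E) (g : E → ℝ) (K : E → ℝ) (K' : E → E) (ε : ℝ) (x : E) : ℝ :=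
  ⨅ y : E, (f x + ⟪f' x, y - x⟫ + g y + bregD K K' x y / ε)

theorem descent_aux (f : E → ℝ) (f' : E → E) (L : ℝ)
    (hf : ∀ x, HasGradientAt f (f' x) x)
    (hlip : ∀ x y, ‖f' x - f' y‖ ≤ L * ‖x - y‖) (x y : E) :
    f y ≤ f x + ⟪f' x, y - x⟫ + L / 2 * ‖y - x‖ ^ 2 := by
  set v := y - x with hv
  have hd : ∀ t : ℝ, HasDerivAt
      (fun t : ℝ => f (x + t • v) - t * ⟪f' x, v⟫ - L / 2 * ‖v‖ ^ 2 * t ^ 2)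
      (⟪f' (x + t • v), v⟫ - ⟪f' x, v⟫ - L / 2 * ‖v‖ ^ 2 * (2 * t)) t := by
    intro t
    have h1 : HasDerivAt (fun t : ℝ => x + t • v) v t := by
      simpa using ((hasDerivAt_id t).smul_const v).const_add x
    have h2 := (hf (x + t • v)).hasFDerivAt.comp_hasDerivAt t h1
    have h3 : HasDerivAt (fun t : ℝ => t * ⟪f' x, v⟫) ⟪f' x, v⟫ t := by
      simpa using (hasDerivAt_id t).mul_const ⟪f' x, v⟫
    have h4 : HasDerivAt (fun t : ℝ => L / 2 * ‖v‖ ^ 2 * t ^ 2)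
        (L / 2 * ‖v‖ ^ 2 * (2 * t)) t := by
      simpa using (hasDerivAt_pow 2 t).const_mul (L / 2 * ‖v‖ ^ 2)
    have h5 : HasDerivAt (fun t : ℝ => f (x + t • v)) ⟪f' (x + t • v), v⟫ t := by
      simpa [Function.comp_def] using h2
    exact (h5.sub h3).sub h4
  have hanti := antitoneOn_of_deriv_nonpos (convex_Icc (0 : ℝ) 1)
    (fun t _ => (hd t).continuousAt.continuousWithinAt)
    (fun t _ => (hd t).differentiableAt.differentiableWithinAt) (by
      intro t ht
      rw [interior_Icc] at ht
      rw [(hd t).deriv, ← inner_sub_left]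
      have h1 := real_inner_le_norm (f' (x + t • v) - f' x) v
      have h2 := hlip (x + t • v) x
      rw [add_sub_cancel_left, norm_smul, Real.norm_of_nonneg ht.1.le] at h2
      nlinarith [mul_le_mul_of_nonneg_right h2 (norm_nonneg v)])
  have h := hanti (left_mem_Icc.2 zero_le_one) (right_mem_Icc.2 zero_le_one) zero_le_one
  have hxy : x + v = y := by simp [hv]
  simp only [one_smul, zero_smul, hxy, add_zero] at h
  linarith

/-- Single-valuedness of the Bregman proximal mapping when `g` is semiconvex with
modulus `ρ` and `εL < m`, `ερ < m`. -/
theorem stmt13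
    (f g : E → ℝ) (f' : E → E) (L : ℝ)
    (hL : 0 < L)
    (hf : ∀ x, HasGradientAt f (f' x) x)
    (hlip : ∀ x y, ‖f' x - f' y‖ ≤ L * ‖x - y‖)
    (hg : Continuous g)
    (hlevel : ∀ r : ℝ, Bornology.IsBounded {x : E | f x + g x ≤ r})
    (K : E → ℝ) (K' : E → E) (m M : ℝ)
    (hm : 0 < m) (hmM : m ≤ M)
    (hK : ∀ x, HasGradientAt K (K' x) x)
    (hKstrong : ∀ x y : E, K x + ⟪K' x, y - x⟫ + m / 2 * ‖y - x‖ ^ 2 ≤ K y)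
    (hKlip : ∀ x y, ‖K' x - K' y‖ ≤ M * ‖x - y‖)
    (ε : ℝ) (hε : 0 < ε)
    (ρ : ℝ) (hρ : 0 ≤ ρ)
    (hsemi : ConvexOn ℝ Set.univ (fun y : E => g y + ρ / 2 * ‖y‖ ^ 2))
    (hεL : ε * L < m) (hερ : ε * ρ < m) :
    ∀ x : E, ∃ y : E, bregT f' g K K' ε x = {y} := by
  intro x
  set φ : E → ℝ := fun y => ⟪f' x, y - x⟫ + g y + bregD K K' x y / ε with hφ
  have hKc : Continuous K :=
    continuous_iff_continuousAt.2 fun z => (hK z).hasFDerivAt.continuousAt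
  have hφc : Continuous φ := by
    simp only [hφ, bregD]
    fun_prop
  have hlow : ∀ y, f y + g y ≤ f x + φ y := by
    intro y
    have h1 := descent_aux f f' L hf hlip x y
    have h2 : m / 2 * ‖y - x‖ ^ 2 ≤ bregD K K' x y := by
      have := hKstrong x y
      simp only [bregD]; linarith
    have h3 : L / 2 * ‖y - x‖ ^ 2 ≤ bregD K K' x y / ε := by
      rw [le_div_iff₀ hε]
      nlinarith [mul_le_mul_of_nonneg_right hεL.le (sq_nonneg ‖y - x‖)]
    simp only [hφ]; linarith
  obtain ⟨y, hy⟩ : ∃ y, ∀ z, φ y ≤ φ z := by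
    refine hφc.exists_forall_le' x ?_
    have hb := hlevel (f x + φ x)
    rw [← Metric.cobounded_eq_cocompact]
    filter_upwards [Bornology.isBounded_def.1 hb] with z hz
    by_contra! hlt
    exact hz (by simp only [mem_setOf_eq]; linarith [hlow z])
  refine ⟨y, Set.eq_singleton_iff_unique_mem.2 ⟨hy, fun z hz => ?_⟩⟩
  have hz' : φ z ≤ φ y := hz y
  set w : E := (1 / 2 : ℝ) • y + (1 / 2 : ℝ) • z with hw
  have hyw : y - w = (1 / 2 : ℝ) • (y - z) := by rw [hw]; module
  have hzw : z - w = -((1 / 2 : ℝ) • (y - z)) := by rw [hw]; module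
  have k1 := hKstrong w y
  have k2 := hKstrong w z
  have hg2 := hsemi.2 (mem_univ y) (mem_univ z) (by norm_num : (0 : ℝ) ≤ 1 / 2)
    (by norm_num : (0 : ℝ) ≤ 1 / 2) (by norm_num)
  simp only [smul_eq_mul, ← hw] at hg2
  have hn : ‖w‖ ^ 2 = (‖y‖ ^ 2 + ‖z‖ ^ 2) / 2 - ‖y - z‖ ^ 2 / 4 := by
    have e : w = (1 / 2 : ℝ) • (y + z) := by rw [hw]; module
    have p := parallelogram_law_with_norm ℝ y z
    rw [e, norm_smul]
    norm_num
    nlinarith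
  rw [hyw, norm_smul] at k1
  rw [hzw, norm_neg, norm_smul, inner_neg_right] at k2
  norm_num at k1 k2
  have hKK : 2 * K w + m / 4 * ‖y - z‖ ^ 2 ≤ K y + K z := by nlinarith
  have hgg : 2 * g w ≤ g y + g z + ρ / 4 * ‖y - z‖ ^ 2 := by
    rw [hn] at hg2; nlinarith
  have hlin : ∀ a : E, ⟪a, y - x⟫ + ⟪a, z - x⟫ = 2 * ⟪a, w - x⟫ := by
    intro a
    rw [← inner_add_right, ← real_inner_smul_right]
    congr 1
    rw [hw]; module
  have hD : 2 * bregD K K' x w + m / 4 * ‖y - z‖ ^ 2 ≤ bregD K K' x y + bregD K K' x z := by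
    have := hlin (K' x)
    simp only [bregD]; linarith
  have hD' := div_le_div_of_nonneg_right hD hε.le
  have hyw' := hy w
  have hl := hlin (f' x)
  simp only [hφ] at hyw' hz'
  have key : m / 4 * ‖y - z‖ ^ 2 / ε ≤ ρ / 4 * ‖y - z‖ ^ 2 := by
    rw [add_div, add_div, mul_div_assoc] at hD'
    linarith
  rw [div_le_iff₀ hε] at key
  have h0 : ‖y - z‖ ^ 2 ≤ 0 := by
    by_contra! hpos
    nlinarith [mul_lt_mul_of_pos_right hερ hpos]
  have h1 : ‖y - z‖ = 0 := by
    have := sq_nonneg ‖y - z‖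
    exact pow_eq_zero_iff (two_ne_zero) |>.1 (le_antisymm h0 this)
  exact (sub_eq_zero.1 (norm_eq_zero.1 h1)).symm
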